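/- Let a₁, b₁, c₁ and a₂, b₂, c₂ be complex numbers with a₁²+b₁² ≠ 0 and a₂²+b₂² ≠ 0, write M₁ = M_{a₁,b₁,c₁}, M₂ = M_{a₂,b₂,c₂}, L₁ = L_{a₁,b₁,c₁}, L₂ = L_{a₂,b₂,c₂}, w₁ = w_{a₁,b₁}, w₂ = w_{a₂,b₂}. Let u, u' ∈ ℂ³ be linearly independent with L₁(u) = 0 and L₂(u') = 0, and set U = span{u, u'}. If the set of subspaces {ker L₁, span{u, w₁}} is disjoint from {ker L₂, span{u', w₂}}, then M₁(U) ≠ M₂(U), and the intersection M₁(U) ∩ M₂(U) is a 1-dimensional subspace of ℂ³ (i.e. the two reflected lines meet in exactly one point of ℙ²(ℂ)). -/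

import Mathlib

/-!
The reflection `M_{a,b,c}` is, up to the nonzero scalar `(a²+b²)²`, an involution, so it maps the
plane `U` to a plane; two distinct planes of `ℂ³` meet in a line, hence everything reduces to
`M₁(U) ≠ M₂(U)`. As `u ∈ ker L₁` and `u' ∈ ker L₂` are fixed up to scalars by `M₁` and `M₂`
respectively, a common image `M₁(U) = M₂(U)` contains `u` and `u'`, and so equals `U`. A plane
through `u` that is stable under `M₁` is either the mirror `ker L₁` or the perpendicular to it
through `u`, namely `span{u, w₁}` (`span_pair_mem_of_Mmap_mem`); likewise for `M₂` and `u'`.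
Thus `U` would belong to both of the sets assumed disjoint.
-/

/-- The linear form `L_{a,b,c}(x,y,z) = a*x + b*y + c*z` on `ℂ³`. -/
noncomputable def Lmap (a b c : ℂ) : (Fin 3 → ℂ) →ₗ[ℂ] ℂ where
  toFun v := a * v 0 + b * v 1 + c * v 2
  map_add' u v := by simp only [Pi.add_apply]; ring
  map_smul' t v := by simp only [Pi.smul_apply, smul_eq_mul, RingHom.id_apply]; ring

/-- The vector `w_{a,b} = (a, b, 0)` in `ℂ³`. -/
def wvec (a b : ℂ) : Fin 3 → ℂ := ![a, b, 0]

/-- The linear map `M_{a,b,c}(v) = (a²+b²)·v − 2·L_{a,b,c}(v)·w_{a,b}` on `ℂ³`,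
inducing the orthogonal symmetry with respect to the line `V(ax+by+cz)` when `a²+b² ≠ 0`. -/
noncomputable def Mmap (a b c : ℂ) : (Fin 3 → ℂ) →ₗ[ℂ] (Fin 3 → ℂ) :=
  (a ^ 2 + b ^ 2) • LinearMap.id - (2 : ℂ) • (Lmap a b c).smulRight (wvec a b)

theorem Lmap_wvec (a b c : ℂ) : Lmap a b c (wvec a b) = a ^ 2 + b ^ 2 := by
  simp [Lmap, wvec]; ring

theorem Mmap_apply (a b c : ℂ) (v : Fin 3 → ℂ) :
    Mmap a b c v = (a ^ 2 + b ^ 2) • v - (2 * Lmap a b c v) • wvec a b := by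
  simp [Mmap, smul_smul]

theorem Mmap_injective (a b c : ℂ) (h : a ^ 2 + b ^ 2 ≠ 0) :
    Function.Injective (Mmap a b c) := by
  rw [← LinearMap.ker_eq_bot, LinearMap.ker_eq_bot']
  intro v hv
  rw [Mmap_apply] at hv
  -- Applying `L` to `M v = 0` gives `-(a²+b²) L v = 0`, so `M v = (a²+b²) v`.
  have hL := congrArg (Lmap a b c) hv
  simp only [map_sub, map_smul, Lmap_wvec, map_zero, smul_eq_mul] at hL
  have hL0 : Lmap a b c v = 0 := by
    have : (a ^ 2 + b ^ 2) * Lmap a b c v = 0 := by linear_combination -hL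
    exact (mul_eq_zero.mp this).resolve_left h
  simpa [hL0, h] using hv

theorem finrank_ker_Lmap (a b c : ℂ) (h : a ^ 2 + b ^ 2 ≠ 0) :
    Module.finrank ℂ (LinearMap.ker (Lmap a b c)) = 2 := by
  have hs : LinearMap.range (Lmap a b c) = ⊤ := by
    apply LinearMap.range_eq_top.mpr
    apply LinearMap.surjective
    intro h0
    exact h (by rw [← Lmap_wvec a b c, h0, LinearMap.zero_apply])
  have := LinearMap.finrank_range_add_finrank_ker (Lmap a b c)
  rw [hs, finrank_top] at this
  simp at this
  omega

theorem finrank_span_pair_eq_two {u v : Fin 3 → ℂ} (h : LinearIndependent ℂ ![u, v]) :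
    Module.finrank ℂ (Submodule.span ℂ {u, v}) = 2 := by
  have := finrank_span_eq_card h
  rwa [Matrix.range_cons, Matrix.range_cons, Matrix.range_empty, Set.union_empty,
    Set.singleton_union, Fintype.card_fin] at this

/-- A plane through `u ∈ ker L` that is stable under the reflection `M` is either the mirror
`ker L` or the plane spanned by `u` and the normal direction `w`. -/
theorem span_pair_mem_of_Mmap_mem (a b c : ℂ) (h : a ^ 2 + b ^ 2 ≠ 0) (u u' : Fin 3 → ℂ)
    (hind : LinearIndependent ℂ ![u, u']) (hLu : Lmap a b c u = 0)
    (hM : Mmap a b c u' ∈ Submodule.span ℂ {u, u'}) :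
    Submodule.span ℂ {u, u'} ∈ ({LinearMap.ker (Lmap a b c), Submodule.span ℂ {u, wvec a b}} :
        Set (Submodule ℂ (Fin 3 → ℂ))) := by
  have hu : u ∈ Submodule.span ℂ {u, u'} := Submodule.subset_span (by simp)
  have hu' : u' ∈ Submodule.span ℂ {u, u'} := Submodule.subset_span (by simp)
  by_cases h0 : Lmap a b c u' = 0
  · left
    apply Submodule.eq_of_le_of_finrank_eq
    · rw [Submodule.span_le]
      rintro x (rfl | rfl)
      · exact hLu
      · exact h0
    · rw [finrank_span_pair_eq_two hind, finrank_ker_Lmap a b c h]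
  · right
    have hw : wvec a b ∈ Submodule.span ℂ {u, u'} := by
      have h2 : (2 * Lmap a b c u') • wvec a b ∈ Submodule.span ℂ {u, u'} := by
        have := Submodule.sub_mem _ (Submodule.smul_mem _ (a ^ 2 + b ^ 2) hu') hM
        simpa only [Mmap_apply, sub_sub_cancel] using this
      exact (Submodule.smul_mem_iff _ (mul_ne_zero two_ne_zero h0)).mp h2
    -- `u` lies in `ker L` but `w` does not, so they are independent.
    have hind' : LinearIndependent ℂ ![u, wvec a b] := by
      rw [LinearIndependent.pair_iff]
      intro s t hst
      have hL := congrArg (Lmap a b c) hst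
      simp only [map_add, map_smul, Lmap_wvec, hLu, map_zero, smul_eq_mul, mul_zero,
        zero_add] at hL
      have ht : t = 0 := (mul_eq_zero.mp hL).resolve_right h
      have hu0 : u ≠ 0 := hind.ne_zero 0
      subst ht
      simpa [hu0] using hst
    apply Eq.symm
    apply Submodule.eq_of_le_of_finrank_eq
    · rw [Submodule.span_le]
      rintro x (rfl | rfl)
      · exact hu
      · exact hw
    · rw [finrank_span_pair_eq_two hind, finrank_span_pair_eq_two hind']

theorem mem_map_Mmap (a b c : ℂ) (h : a ^ 2 + b ^ 2 ≠ 0) {v : Fin 3 → ℂ}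
    (hv : Lmap a b c v = 0) {U : Submodule ℂ (Fin 3 → ℂ)} (hU : v ∈ U) :
    v ∈ Submodule.map (Mmap a b c) U := by
  have h1 := Submodule.mem_map_of_mem (f := Mmap a b c) hU
  rw [Mmap_apply, hv, mul_zero, zero_smul, sub_zero] at h1
  exact (Submodule.smul_mem_iff _ h).mp h1

/-- With `a₁²+b₁² ≠ 0`, `a₂²+b₂² ≠ 0`, `u, u'` linearly independent, `L₁(u) = 0`,
`L₂(u') = 0` and `U = span{u, u'}`: if `{ker L₁, span{u, w₁}}` is disjoint from
`{ker L₂, span{u', w₂}}`, then `M₁(U) ≠ M₂(U)` and `M₁(U) ∩ M₂(U)` is a 1-dimensional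
subspace of `ℂ³` (the two reflected lines meet in exactly one point of `ℙ²(ℂ)`). -/
theorem stmt_7 (a₁ b₁ c₁ a₂ b₂ c₂ : ℂ)
    (h₁ : a₁ ^ 2 + b₁ ^ 2 ≠ 0) (h₂ : a₂ ^ 2 + b₂ ^ 2 ≠ 0)
    (u u' : Fin 3 → ℂ) (hind : LinearIndependent ℂ ![u, u'])
    (hLu : Lmap a₁ b₁ c₁ u = 0) (hLu' : Lmap a₂ b₂ c₂ u' = 0)
    (U : Submodule ℂ (Fin 3 → ℂ)) (hU : U = Submodule.span ℂ {u, u'})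
    (hdisj : Disjoint
      ({LinearMap.ker (Lmap a₁ b₁ c₁), Submodule.span ℂ {u, wvec a₁ b₁}} :
        Set (Submodule ℂ (Fin 3 → ℂ)))
      ({LinearMap.ker (Lmap a₂ b₂ c₂), Submodule.span ℂ {u', wvec a₂ b₂}} :
        Set (Submodule ℂ (Fin 3 → ℂ)))) :
    Submodule.map (Mmap a₁ b₁ c₁) U ≠ Submodule.map (Mmap a₂ b₂ c₂) U ∧
    Module.finrank ℂ
      ↥(Submodule.map (Mmap a₁ b₁ c₁) U ⊓ Submodule.map (Mmap a₂ b₂ c₂) U) = 1 := by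
  have hfU : Module.finrank ℂ U = 2 := by rw [hU]; exact finrank_span_pair_eq_two hind
  have hf₁ : Module.finrank ℂ (Submodule.map (Mmap a₁ b₁ c₁) U) = 2 := by
    rw [← (Submodule.equivMapOfInjective _ (Mmap_injective a₁ b₁ c₁ h₁) U).finrank_eq, hfU]
  have hf₂ : Module.finrank ℂ (Submodule.map (Mmap a₂ b₂ c₂) U) = 2 := by
    rw [← (Submodule.equivMapOfInjective _ (Mmap_injective a₂ b₂ c₂ h₂) U).finrank_eq, hfU]
  have hu : u ∈ U := hU ▸ Submodule.subset_span (by simp)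
  have hu' : u' ∈ U := hU ▸ Submodule.subset_span (by simp)
  have hne : Submodule.map (Mmap a₁ b₁ c₁) U ≠ Submodule.map (Mmap a₂ b₂ c₂) U := by
    intro heq
    have hV : U = Submodule.map (Mmap a₁ b₁ c₁) U := by
      apply Submodule.eq_of_le_of_finrank_eq
      · nth_rewrite 1 [hU]
        rw [Submodule.span_le]
        rintro x (rfl | rfl)
        · exact mem_map_Mmap a₁ b₁ c₁ h₁ hLu hu
        · rw [heq]
          exact mem_map_Mmap a₂ b₂ c₂ h₂ hLu' hu'
      · rw [hfU, hf₁]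
    have hM₁ : Mmap a₁ b₁ c₁ u' ∈ U := hV ▸ Submodule.mem_map_of_mem hu'
    have hM₂ : Mmap a₂ b₂ c₂ u ∈ U := (hV.trans heq) ▸ Submodule.mem_map_of_mem hu
    have hU' : U = Submodule.span ℂ {u', u} := by rw [hU, Set.pair_comm]
    have hS₁ := span_pair_mem_of_Mmap_mem a₁ b₁ c₁ h₁ u u' hind hLu (hU ▸ hM₁)
    have hS₂ := span_pair_mem_of_Mmap_mem a₂ b₂ c₂ h₂ u' u
      (LinearIndependent.pair_symm_iff.mp hind) hLu' (hU' ▸ hM₂)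
    rw [← hU] at hS₁
    rw [← hU'] at hS₂
    exact Set.disjoint_left.mp hdisj hS₁ hS₂
  refine ⟨hne, ?_⟩
  have hsum := Submodule.finrank_sup_add_finrank_inf_eq
    (Submodule.map (Mmap a₁ b₁ c₁) U) (Submodule.map (Mmap a₂ b₂ c₂) U)
  have hsup : Module.finrank ℂ
      ↥(Submodule.map (Mmap a₁ b₁ c₁) U ⊔ Submodule.map (Mmap a₂ b₂ c₂) U) ≤ 3 := by
    simpa using Submodule.finrank_le
      (Submodule.map (Mmap a₁ b₁ c₁) U ⊔ Submodule.map (Mmap a₂ b₂ c₂) U)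
  have hle := Submodule.finrank_mono
    (inf_le_left : Submodule.map (Mmap a₁ b₁ c₁) U ⊓ Submodule.map (Mmap a₂ b₂ c₂) U ≤ _)
  have hinf : Module.finrank ℂ
      ↥(Submodule.map (Mmap a₁ b₁ c₁) U ⊓ Submodule.map (Mmap a₂ b₂ c₂) U) ≠ 2 := by
    intro h
    exact hne ((Submodule.eq_of_le_of_finrank_eq inf_le_left (h.trans hf₁.symm)).symm.trans
      (Submodule.eq_of_le_of_finrank_eq inf_le_right (h.trans hf₂.symm)))
  omega
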